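/- Let ℓ > 0 and let u be a classical solution of the rB equation on [0,T). Set M := sup_{x∈ℝ} u_0'(x) and assume M is finite. Then for every t ∈ [0,T) with M·t + 2 > 0 and every x ∈ ℝ one has u_x(t,x) ≤ 2M/(M·t + 2) ≤ M. -/

import Mathlib

/-!
Write `v = u_x`. Since `𝔊_ℓ` is the Green's function of `1 - ℓ² ∂ₓₓ`, one has
`ℓ² P_xx = P - v² / 2`, so differentiating the equation in `x` gives
`v_t + u v_x = - v² / 2 - P ≤ - v² / 2`, because `P ≥ 0`. Hence along a characteristic
`X' = u(t, X)` the function `H(s) = v(s, X(s))` is a subsolution of the Riccati equation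
`y' = - y² / 2`, whose solution with `y(0) = M` is `2M / (Ms + 2)`. The comparison is made through
`φ(s) = H(s) (Ms + 2)² - 2M (Ms + 2)`, for which
`φ' ≤ - (H (Ms + 2) - 2M)² / 2 ≤ 0` and `φ(0) = 4 (H(0) - M) ≤ 0`.

The identity for `P_xx` is `hasDerivAt_deriv_greenConv`, the Riccati inequality along
characteristics comes from `hasDerivAt_ux_along`, and the characteristic through a given point
`(t, x)` is traced back to time `0` in `exists_characteristic`; it exists on all of `[0, t]` because
`u` and `u_x` are bounded there. At time `0` only the continuity of `H` is used.
-/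

open MeasureTheory Set Filter

/-- The nonlocal term `P(t,·) = 𝔊_ℓ ∗ (½ u_x(t,·)²)` of the regularised Burgers equation,
where `𝔊_ℓ(x) = (2ℓ)⁻¹ exp(−|x|/ℓ)`. -/
noncomputable def rbP (ℓ : ℝ) (ux : ℝ → ℝ → ℝ) (t x : ℝ) : ℝ :=
  ∫ y : ℝ, (2 * ℓ)⁻¹ * Real.exp (-|x - y| / ℓ) * (ux t y ^ 2 / 2)

/-- A classical solution of the regularised Burgers equation
`u_t + u u_x + ℓ² P_x = 0` on `[0,T)`:  `u` is jointly `C²`, `u, u_x, u_{xx}` are bounded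
on `[0,t] × ℝ` for every `t < T`, `u_x(t,·)` is square-integrable for every `t < T`,
and the equation holds pointwise.  Here `ut, ux, uxx` denote the partial derivatives of `u`
and `Px` the spatial derivative of `P = rbP ℓ ux`. -/
structure IsClassicalSolRB (ℓ T : ℝ) (u ut ux uxx Px : ℝ → ℝ → ℝ) : Prop where
  smooth : ContDiffOn ℝ 2 (fun p : ℝ × ℝ => u p.1 p.2) (Set.Ico 0 T ×ˢ Set.univ)
  hut : ∀ t ∈ Set.Ico (0 : ℝ) T, ∀ x : ℝ, HasDerivAt (fun s => u s x) (ut t x) t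
  hux : ∀ t ∈ Set.Ico (0 : ℝ) T, ∀ x : ℝ, HasDerivAt (fun y => u t y) (ux t x) x
  huxx : ∀ t ∈ Set.Ico (0 : ℝ) T, ∀ x : ℝ, HasDerivAt (fun y => ux t y) (uxx t x) x
  bounded : ∀ t ∈ Set.Ico (0 : ℝ) T, ∃ C : ℝ, ∀ s ∈ Set.Icc (0 : ℝ) t, ∀ x : ℝ,
      |u s x| ≤ C ∧ |ux s x| ≤ C ∧ |uxx s x| ≤ C
  sqInt : ∀ t ∈ Set.Ico (0 : ℝ) T, MeasureTheory.Integrable (fun x : ℝ => ux t x ^ 2)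
  hPx : ∀ t ∈ Set.Ico (0 : ℝ) T, ∀ x : ℝ, HasDerivAt (fun y => rbP ℓ ux t y) (Px t x) x
  eqn : ∀ t ∈ Set.Ico (0 : ℝ) T, ∀ x : ℝ, ut t x + u t x * ux t x + ℓ ^ 2 * Px t x = 0

/-! ### The Green's function of `1 - ℓ² ∂ₓₓ` -/

lemma hasDerivAt_integral_Iic {f : ℝ → ℝ} (hf : Continuous f)
    (hi : ∀ a, IntegrableOn f (Iic a)) (x : ℝ) :
    HasDerivAt (fun z => ∫ y in Iic z, f y) (f x) x := by
  have h : (fun z => ∫ y in Iic z, f y) = fun z => (∫ y in Iic x, f y) + ∫ y in x..z, f y := by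
    funext z
    rw [← intervalIntegral.integral_Iic_sub_Iic (hi x) (hi z)]
    ring
  rw [h]
  exact (intervalIntegral.integral_hasDerivAt_right (by simp)
    (hf.stronglyMeasurableAtFilter _ _) hf.continuousAt).const_add _

lemma hasDerivAt_integral_Ioi {f : ℝ → ℝ} (hf : Continuous f)
    (hi : ∀ a, IntegrableOn f (Ioi a)) (x : ℝ) :
    HasDerivAt (fun z => ∫ y in Ioi z, f y) (-f x) x := by
  have h : (fun z => ∫ y in Ioi z, f y) = fun z => (∫ y in Ioi x, f y) - ∫ y in x..z, f y := by
    funext z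
    rw [← intervalIntegral.integral_interval_add_Ioi (hi x) (hi z)]
    ring
  rw [h]
  exact (intervalIntegral.integral_hasDerivAt_right (by simp)
    (hf.stronglyMeasurableAtFilter _ _) hf.continuousAt).const_sub _

/-- The part of `𝔊_ℓ ∗ g` coming from the half-line to the left of `x`, with the factor depending
on `x` taken out of the integral. -/
noncomputable def greenLeft (ℓ : ℝ) (g : ℝ → ℝ) (x : ℝ) : ℝ :=
  (2 * ℓ)⁻¹ * Real.exp (-x / ℓ) * ∫ y in Iic x, Real.exp (y / ℓ) * g y

/-- The part of `𝔊_ℓ ∗ g` coming from the half-line to the right of `x`, with the factor depending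
on `x` taken out of the integral. -/
noncomputable def greenRight (ℓ : ℝ) (g : ℝ → ℝ) (x : ℝ) : ℝ :=
  (2 * ℓ)⁻¹ * Real.exp (x / ℓ) * ∫ y in Ioi x, Real.exp (-y / ℓ) * g y

lemma integrableOn_expMul_left {ℓ : ℝ} (hℓ : 0 < ℓ) {g : ℝ → ℝ}
    (hgi : Integrable g) (a : ℝ) :
    IntegrableOn (fun y => Real.exp (y / ℓ) * g y) (Iic a) := by
  refine Integrable.bdd_mul (c := Real.exp (a / ℓ)) hgi.integrableOn
    (by fun_prop) ?_
  filter_upwards [ae_restrict_mem measurableSet_Iic] with y hy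
  rw [Real.norm_eq_abs, Real.abs_exp]
  have : y ≤ a := hy
  gcongr

lemma integrableOn_expMul_right {ℓ : ℝ} (hℓ : 0 < ℓ) {g : ℝ → ℝ}
    (hgi : Integrable g) (a : ℝ) :
    IntegrableOn (fun y => Real.exp (-y / ℓ) * g y) (Ioi a) := by
  refine Integrable.bdd_mul (c := Real.exp (-a / ℓ)) hgi.integrableOn
    (by fun_prop) ?_
  filter_upwards [ae_restrict_mem measurableSet_Ioi] with y hy
  rw [Real.norm_eq_abs, Real.abs_exp]
  have : a < y := hy
  gcongr

lemma greenConv_eq {ℓ : ℝ} (hℓ : 0 < ℓ) {g : ℝ → ℝ}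
    (hgi : Integrable g) (x : ℝ) :
    ∫ y : ℝ, (2 * ℓ)⁻¹ * Real.exp (-|x - y| / ℓ) * g y = greenLeft ℓ g x + greenRight ℓ g x := by
  have e1 : EqOn (fun y => (2 * ℓ)⁻¹ * Real.exp (-|x - y| / ℓ) * g y)
      (fun y => (2 * ℓ)⁻¹ * Real.exp (-x / ℓ) * (Real.exp (y / ℓ) * g y)) (Iic x) := by
    intro y hy
    have hy' : y ≤ x := hy
    have : Real.exp (-|x - y| / ℓ) = Real.exp (-x / ℓ) * Real.exp (y / ℓ) := by
      rw [abs_of_nonneg (by linarith), ← Real.exp_add]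
      ring_nf
    simp only [this]
    ring
  have e2 : EqOn (fun y => (2 * ℓ)⁻¹ * Real.exp (-|x - y| / ℓ) * g y)
      (fun y => (2 * ℓ)⁻¹ * Real.exp (x / ℓ) * (Real.exp (-y / ℓ) * g y)) (Ioi x) := by
    intro y hy
    have hy' : x < y := hy
    have : Real.exp (-|x - y| / ℓ) = Real.exp (x / ℓ) * Real.exp (-y / ℓ) := by
      rw [abs_of_neg (by linarith), ← Real.exp_add]
      ring_nf
    simp only [this]
    ring
  rw [← intervalIntegral.integral_Iic_add_Ioi (b := x)
      ((integrableOn_congr_fun e1 measurableSet_Iic).2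
        ((integrableOn_expMul_left hℓ hgi x).const_mul _))
      ((integrableOn_congr_fun e2 measurableSet_Ioi).2
        ((integrableOn_expMul_right hℓ hgi x).const_mul _)),
    setIntegral_congr_fun measurableSet_Iic e1, setIntegral_congr_fun measurableSet_Ioi e2,
    integral_const_mul, integral_const_mul]
  rfl

lemma hasDerivAt_greenLeft {ℓ : ℝ} (hℓ : 0 < ℓ) {g : ℝ → ℝ}
    (hg : Continuous g) (hgi : Integrable g) (x : ℝ) :
    HasDerivAt (greenLeft ℓ g) (-greenLeft ℓ g x / ℓ + g x / (2 * ℓ)) x := by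
  have hI := hasDerivAt_integral_Iic (f := fun y => Real.exp (y / ℓ) * g y) (by fun_prop)
    (integrableOn_expMul_left hℓ hgi) x
  have hE : HasDerivAt (fun z => (2 * ℓ)⁻¹ * Real.exp (-z / ℓ))
      ((2 * ℓ)⁻¹ * (Real.exp (-x / ℓ) * (-1 / ℓ))) x :=
    (((hasDerivAt_id x).neg.div_const ℓ).exp).const_mul _
  refine (hE.mul hI).congr_deriv ?_
  have h1 : Real.exp (-x / ℓ) * Real.exp (x / ℓ) = 1 := by
    rw [← Real.exp_add]; ring_nf; simp
  unfold greenLeft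
  linear_combination ((2 * ℓ)⁻¹ * g x) * h1

lemma hasDerivAt_greenRight {ℓ : ℝ} (hℓ : 0 < ℓ) {g : ℝ → ℝ}
    (hg : Continuous g) (hgi : Integrable g) (x : ℝ) :
    HasDerivAt (greenRight ℓ g) (greenRight ℓ g x / ℓ - g x / (2 * ℓ)) x := by
  have hI := hasDerivAt_integral_Ioi (f := fun y => Real.exp (-y / ℓ) * g y) (by fun_prop)
    (integrableOn_expMul_right hℓ hgi) x
  have hE : HasDerivAt (fun z => (2 * ℓ)⁻¹ * Real.exp (z / ℓ))
      ((2 * ℓ)⁻¹ * (Real.exp (x / ℓ) * (1 / ℓ))) x :=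
    (((hasDerivAt_id x).div_const ℓ).exp).const_mul _
  refine (hE.mul hI).congr_deriv ?_
  have h1 : Real.exp (-x / ℓ) * Real.exp (x / ℓ) = 1 := by
    rw [← Real.exp_add]; ring_nf; simp
  unfold greenRight
  linear_combination (-(2 * ℓ)⁻¹ * g x) * h1

/-- The convolution `Q = 𝔊_ℓ ∗ g` with a continuous integrable `g` solves `Q - ℓ² Q'' = g`. -/
lemma hasDerivAt_deriv_greenConv {ℓ : ℝ} (hℓ : 0 < ℓ) {g : ℝ → ℝ}
    (hg : Continuous g) (hgi : Integrable g) {Q' : ℝ → ℝ}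
    (hQ : ∀ x, HasDerivAt (fun z => ∫ y : ℝ, (2 * ℓ)⁻¹ * Real.exp (-|z - y| / ℓ) * g y) (Q' x) x)
    (x : ℝ) :
    HasDerivAt Q' (((∫ y : ℝ, (2 * ℓ)⁻¹ * Real.exp (-|x - y| / ℓ) * g y) - g x) / ℓ ^ 2) x := by
  have hQ' : Q' = fun z => (greenRight ℓ g z - greenLeft ℓ g z) / ℓ := by
    funext z
    have h := hQ z
    simp only [greenConv_eq hℓ hgi] at h
    rw [h.unique ((hasDerivAt_greenLeft hℓ hg hgi z).add (hasDerivAt_greenRight hℓ hg hgi z))]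
    ring
  rw [hQ', greenConv_eq hℓ hgi]
  refine (((hasDerivAt_greenRight hℓ hg hgi x).sub
    (hasDerivAt_greenLeft hℓ hg hgi x)).div_const ℓ).congr_deriv ?_
  field_simp
  ring

/-! ### Evolution of `u_x` along characteristics -/

section Solution

variable {ℓ T : ℝ} {u ut ux uxx Px : ℝ → ℝ → ℝ}

lemma rbP_nonneg (hℓ : 0 < ℓ) (ux : ℝ → ℝ → ℝ) (t x : ℝ) : 0 ≤ rbP ℓ ux t x :=
  integral_nonneg fun y => by positivity

namespace IsClassicalSolRB

lemma hasDerivAt_Px (hsol : IsClassicalSolRB ℓ T u ut ux uxx Px) (hℓ : 0 < ℓ) {t : ℝ}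
    (ht : t ∈ Ico 0 T) (x : ℝ) :
    HasDerivAt (Px t) ((rbP ℓ ux t x - ux t x ^ 2 / 2) / ℓ ^ 2) x := by
  have hc : Continuous (ux t) :=
    continuous_iff_continuousAt.2 fun y => (hsol.huxx t ht y).continuousAt
  exact hasDerivAt_deriv_greenConv hℓ (g := fun y => ux t y ^ 2 / 2) (by fun_prop)
    ((hsol.sqInt t ht).div_const 2) (hsol.hPx t ht) x

lemma continuousOn_ux (hsol : IsClassicalSolRB ℓ T u ut ux uxx Px) :
    ContinuousOn (fun p : ℝ × ℝ => ux p.1 p.2) (Ico 0 T ×ˢ univ) := by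
  have hS : UniqueDiffOn ℝ (Ico (0 : ℝ) T ×ˢ (univ : Set ℝ)) :=
    (uniqueDiffOn_Ico 0 T).prod uniqueDiffOn_univ
  have hc := hsol.smooth.continuousOn_fderivWithin hS (by norm_num)
  refine (hc.clm_apply (continuousOn_const (c := ((0 : ℝ), (1 : ℝ))))).congr ?_
  rintro ⟨t, x⟩ hp
  have h1 := (hsol.smooth.differentiableOn (by norm_num) (t, x) hp).hasFDerivWithinAt
  have h2 : HasDerivWithinAt (fun y : ℝ => (t, y)) ((0 : ℝ), (1 : ℝ)) univ x :=
    ((hasDerivAt_const x t).prodMk (hasDerivAt_id x)).hasDerivWithinAt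
  have h3 := (h1.comp_hasDerivWithinAt x h2 fun y _ => ⟨hp.1, mem_univ _⟩).hasDerivAt univ_mem
  exact (hsol.hux t hp.1 x).unique h3

lemma contDiffAt (hsol : IsClassicalSolRB ℓ T u ut ux uxx Px) {t : ℝ} (ht : t ∈ Ioo 0 T)
    (x : ℝ) : ContDiffAt ℝ 2 (fun p : ℝ × ℝ => u p.1 p.2) (t, x) :=
  hsol.smooth.contDiffAt (prod_mem_nhds (Ico_mem_nhds ht.1 ht.2) univ_mem)

lemma fderiv_apply_snd (hsol : IsClassicalSolRB ℓ T u ut ux uxx Px) {t : ℝ} (ht : t ∈ Ioo 0 T)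
    (x : ℝ) : fderiv ℝ (fun p : ℝ × ℝ => u p.1 p.2) (t, x) (0, 1) = ux t x := by
  have h1 := ((hsol.contDiffAt ht x).differentiableAt (by norm_num)).hasFDerivAt
  have h3 := h1.comp_hasDerivAt x ((hasDerivAt_const x t).prodMk (hasDerivAt_id x))
  exact h3.unique (hsol.hux t ⟨ht.1.le, ht.2⟩ x)

lemma fderiv_apply_fst (hsol : IsClassicalSolRB ℓ T u ut ux uxx Px) {t : ℝ} (ht : t ∈ Ioo 0 T)
    (x : ℝ) : fderiv ℝ (fun p : ℝ × ℝ => u p.1 p.2) (t, x) (1, 0) = ut t x := by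
  have h1 := ((hsol.contDiffAt ht x).differentiableAt (by norm_num)).hasFDerivAt
  have h3 := h1.comp_hasDerivAt t ((hasDerivAt_id t).prodMk (hasDerivAt_const t x))
  exact h3.unique (hsol.hut t ⟨ht.1.le, ht.2⟩ x)

/-- The equation `v_t + u v_x = - v² / 2 - P` for `v = u_x`, read along a characteristic. The
mixed derivative `u_xt` is exchanged for `u_tx`, which is computed from the equation for `u`. -/
lemma hasDerivAt_ux_along (hsol : IsClassicalSolRB ℓ T u ut ux uxx Px) (hℓ : 0 < ℓ) {s : ℝ}
    (hs : s ∈ Ioo 0 T) {X : ℝ → ℝ} (hX : HasDerivAt X (u s (X s)) s) :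
    HasDerivAt (fun τ => ux τ (X τ)) (-ux s (X s) ^ 2 / 2 - rbP ℓ ux s (X s)) s := by
  have hs' : s ∈ Ico 0 T := ⟨hs.1.le, hs.2⟩
  set U : ℝ × ℝ → ℝ := fun p => u p.1 p.2 with hU
  have hC := hsol.contDiffAt hs (X s)
  have hsymm := hC.isSymmSndFDerivAt (by simp)
  have hF : HasFDerivAt (fderiv ℝ U) (fderiv ℝ (fderiv ℝ U) (s, X s)) (s, X s) :=
    ((hC.fderiv_right (m := 1) (by norm_num)).differentiableAt (by norm_num)).hasFDerivAt
  set D := fderiv ℝ (fderiv ℝ U) (s, X s) with hD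
  have hx : HasDerivAt (fun y => fderiv ℝ U (s, y)) (D (0, 1)) (X s) :=
    hF.comp_hasDerivAt (X s) ((hasDerivAt_const (X s) s).prodMk (hasDerivAt_id (X s)))
  have huxx : D (0, 1) (0, 1) = uxx s (X s) := by
    have h := hx.clm_apply (hasDerivAt_const (X s) ((0 : ℝ), (1 : ℝ)))
    simp only [hU, hsol.fderiv_apply_snd hs, map_zero, add_zero] at h
    exact h.unique (hsol.huxx s hs' (X s))
  have hutx : D (0, 1) (1, 0) = -(ux s (X s) * ux s (X s) + u s (X s) * uxx s (X s))
      - ℓ ^ 2 * ((rbP ℓ ux s (X s) - ux s (X s) ^ 2 / 2) / ℓ ^ 2) := by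
    have h := hx.clm_apply (hasDerivAt_const (X s) ((1 : ℝ), (0 : ℝ)))
    simp only [hU, hsol.fderiv_apply_fst hs, map_zero, add_zero] at h
    have h' := (((hsol.hux s hs' (X s)).mul (hsol.huxx s hs' (X s))).neg).sub
      ((hsol.hasDerivAt_Px hℓ hs' (X s)).const_mul (ℓ ^ 2))
    refine h.unique (h'.congr_of_eventuallyEq (Eventually.of_forall fun y => ?_))
    have := hsol.eqn s hs' y
    simp only [Pi.sub_apply, Pi.neg_apply, Pi.mul_apply]
    linarith
  have hcurve : HasDerivAt (fun τ => fderiv ℝ U (τ, X τ)) (D (1, u s (X s))) s :=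
    hF.comp_hasDerivAt s ((hasDerivAt_id s).prodMk hX)
  have h := hcurve.clm_apply (hasDerivAt_const s ((0 : ℝ), (1 : ℝ)))
  have hdec : ((1 : ℝ), u s (X s)) = (1, 0) + u s (X s) • ((0 : ℝ), (1 : ℝ)) := by simp
  have hval : D (1, u s (X s)) (0, 1) + fderiv ℝ U (s, X s) 0
      = -ux s (X s) ^ 2 / 2 - rbP ℓ ux s (X s) := by
    rw [map_zero, add_zero, hdec, map_add, map_smul, add_apply,
      smul_apply, hsymm.eq (1, 0) (0, 1), huxx, hutx, smul_eq_mul]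
    field_simp
    ring
  refine (h.congr_deriv hval).congr_of_eventuallyEq ?_
  filter_upwards [Ioo_mem_nhds hs.1 hs.2] with τ hτ
  exact (hsol.fderiv_apply_snd hτ (X τ)).symm

/-- The characteristic through `(t, x)` exists on the whole of `[0, t]`. -/
lemma exists_characteristic (hsol : IsClassicalSolRB ℓ T u ut ux uxx Px) {t : ℝ}
    (ht : t ∈ Ico 0 T) (x : ℝ) :
    ∃ X : ℝ → ℝ, X t = x ∧ ∀ s ∈ Icc 0 t, HasDerivWithinAt X (u s (X s)) (Icc 0 t) s := by
  obtain ⟨C, hC⟩ := hsol.bounded t ht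
  have hC0 : 0 ≤ C := (abs_nonneg _).trans (hC t ⟨ht.1, le_rfl⟩ 0).1
  have hsub : ∀ s ∈ Icc 0 t, s ∈ Ico 0 T := fun s hs => ⟨hs.1, hs.2.trans_lt ht.2⟩
  -- The bound `|u| ≤ C` is global, so the ball of radius `C t` is never left on `[0, t]`.
  have hPL : IsPicardLindelof u (tmin := 0) (tmax := t) ⟨t, ht.1, le_rfl⟩ x
      (C.toNNReal * t.toNNReal) 0 C.toNNReal C.toNNReal := by
    refine ⟨fun s hs => ?_, fun y _ s hs => ?_, fun s hs y _ => ?_, ?_⟩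
    · refine LipschitzWith.lipschitzOnWith ?_
      refine lipschitzWith_of_nnnorm_deriv_le
        (fun y => (hsol.hux s (hsub s hs) y).differentiableAt) fun y => ?_
      rw [(hsol.hux s (hsub s hs) y).deriv, ← NNReal.coe_le_coe, Real.coe_toNNReal _ hC0]
      exact (hC s hs y).2.1
    · exact (hsol.hut s (hsub s hs) y).continuousAt.continuousWithinAt
    · rw [Real.coe_toNNReal _ hC0]
      exact (hC s hs y).1
    · simp [ht.1, hC0]
  exact hPL.exists_eq_forall_mem_Icc_hasDerivWithinAt₀

end IsClassicalSolRB

end Solution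

/-! ### Riccati comparison -/

/-- Comparison for `H' ≤ - H² / 2`, without any sign condition on `M` or on `M s + 2`. -/
lemma riccati_comparison {H : ℝ → ℝ} {M t : ℝ} (ht : 0 ≤ t) (hc : ContinuousOn H (Icc 0 t))
    (hd : ∀ s ∈ Ioo 0 t, ∃ H', HasDerivAt H H' s ∧ H' ≤ -H s ^ 2 / 2) (h0 : H 0 ≤ M) :
    H t * (M * t + 2) ^ 2 ≤ 2 * M * (M * t + 2) := by
  set φ : ℝ → ℝ := fun s => H s * (M * s + 2) ^ 2 - 2 * M * (M * s + 2) with hφ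
  have hφd : ∀ s ∈ Ioo 0 t, ∃ φ', HasDerivAt φ φ' s ∧ φ' ≤ 0 := by
    intro s hs
    obtain ⟨H', hH', hle⟩ := hd s hs
    have hl : HasDerivAt (fun s => M * s + 2) M s := by
      simpa using ((hasDerivAt_id s).const_mul M).add_const 2
    refine ⟨_, (hH'.mul (hl.pow 2)).sub (hl.const_mul (2 * M)), ?_⟩
    simp only [Pi.pow_apply]
    have h1 := mul_le_mul_of_nonneg_right hle (sq_nonneg (M * s + 2))
    push_cast
    nlinarith [sq_nonneg (H s * (M * s + 2) - 2 * M)]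
  have hanti : AntitoneOn φ (Icc 0 t) := by
    refine antitoneOn_of_deriv_nonpos (convex_Icc 0 t) (by fun_prop) ?_ ?_ <;>
      rw [interior_Icc] <;> intro s hs <;> obtain ⟨φ', h, hle⟩ := hφd s hs
    · exact h.differentiableAt.differentiableWithinAt
    · rwa [h.deriv]
  have h := hanti ⟨le_rfl, ht⟩ ⟨ht, le_rfl⟩ ht
  simp only [hφ] at h
  linarith

/-- **Oleinik inequality for smooth solutions** (Proposition 3.2):
if `M = sup_x u_0'(x)` is finite then `u_x(t,x) ≤ 2M/(Mt+2) ≤ M` for `t ∈ [0,T)`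
with `Mt + 2 > 0`. -/
theorem oleinik_smooth (ℓ T : ℝ) (hℓ : 0 < ℓ) (u ut ux uxx Px : ℝ → ℝ → ℝ)
    (hsol : IsClassicalSolRB ℓ T u ut ux uxx Px) (M : ℝ)
    (hM : IsLUB (Set.range fun x => ux 0 x) M) :
    ∀ t ∈ Set.Ico (0 : ℝ) T, M * t + 2 > 0 →
      ∀ x : ℝ, ux t x ≤ 2 * M / (M * t + 2) ∧ 2 * M / (M * t + 2) ≤ M := by
  intro t ht hpos x
  refine ⟨?_, ?_⟩
  · obtain ⟨X, hXt, hX⟩ := hsol.exists_characteristic ht x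
    have hcont : ContinuousOn (fun s => ux s (X s)) (Icc 0 t) :=
      hsol.continuousOn_ux.comp
        (continuousOn_id.prodMk fun s hs => (hX s hs).continuousWithinAt)
        fun s hs => ⟨⟨hs.1, hs.2.trans_lt ht.2⟩, mem_univ _⟩
    have h := riccati_comparison ht.1 hcont (M := M)
      (fun s hs => ⟨_, hsol.hasDerivAt_ux_along hℓ ⟨hs.1, hs.2.trans ht.2⟩
        ((hX s ⟨hs.1.le, hs.2.le⟩).hasDerivAt (Icc_mem_nhds hs.1 hs.2)),
        by linarith [rbP_nonneg hℓ ux s (X s)]⟩)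
      (hM.1 ⟨X 0, rfl⟩)
    rw [hXt] at h
    rw [le_div_iff₀ hpos]
    refine le_of_mul_le_mul_right ?_ hpos
    linarith
  · rw [div_le_iff₀ hpos]
    nlinarith [mul_nonneg (sq_nonneg M) ht.1]
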